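/- arXiv:2105.07181 — 2 statements merged into one kernel-verified Lean document; each statement's English description precedes it below -/
import Mathlib

section
/- Let the index set {1,…,N} be partitioned into H of size N₁ and L of size N₂ (N = N₁ + N₂), let 1 ≤ n₁ ≤ N₁, 1 ≤ n₂ ≤ N₂, m = n₁ + n₂, and let g₁,…,g_N be vectors in a real inner product space satisfying the typicality condition ∑_{i∈H} g_i = ∑_{i=1}^N g_i. Let ĝ_TS = (1/m)·( ∑_{i∈h} g_i + ∑_{j∈l} g_j ), where h is a uniformly random n₁-subset of H and l is an independent uniformly random n₂-subset of L. Then E[ĝ_TS] = (n₁·N)/(N₁·m) · ḡ, where ḡ = (1/N)·∑_{i=1}^N g_i is the full gradient. -/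
open Finset

/-- Expectation of `f` under the uniform distribution over all `n`-element
subsets of `S` (simple random sampling without replacement). -/
noncomputable def uExp {N : ℕ} {E : Type*} [AddCommGroup E] [Module ℝ E]
    (S : Finset (Fin N)) (n : ℕ) (f : Finset (Fin N) → E) : E :=
  ((S.powersetCard n).card : ℝ)⁻¹ • ∑ s ∈ S.powersetCard n, f s

/-- Expectation of `f` when `h` is a uniformly random `n₁`-subset of `S` and,
independently, `l` is a uniformly random `n₂`-subset of `T`. -/
noncomputable def u2Exp {N : ℕ} {E : Type*} [AddCommGroup E] [Module ℝ E]
    (S T : Finset (Fin N)) (n₁ n₂ : ℕ)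
    (f : Finset (Fin N) → Finset (Fin N) → E) : E :=
  (((S.powersetCard n₁).card : ℝ) * ((T.powersetCard n₂).card : ℝ))⁻¹ •
    ∑ h ∈ S.powersetCard n₁, ∑ l ∈ T.powersetCard n₂, f h l

/-- Summing `∑ i ∈ s, f i` over the `n`-subsets `s` of `S` counts each element of `S`
`(#S - 1).choose (n - 1)` times. -/
theorem sum_powersetCard_sum {α M : Type*} [DecidableEq α] [AddCommMonoid M]
    (S : Finset α) {n : ℕ} (hn : 1 ≤ n) (f : α → M) :
    ∑ s ∈ S.powersetCard n, ∑ i ∈ s, f i = (#S - 1).choose (n - 1) • ∑ i ∈ S, f i := by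
  rw [Finset.sum_comm' (t' := S) (s' := fun i => (S.powersetCard n).filter ({i} ⊆ ·)),
    Finset.smul_sum]
  · refine Finset.sum_congr rfl fun i hi => ?_
    rw [Finset.sum_const, card_filter_powersetCard_subset _ _ _ (by simpa using hi) (by simpa)]
    simp
  · intro s i
    simp only [mem_powersetCard, mem_filter, singleton_subset_iff]
    exact ⟨fun h => ⟨h, h.1.1 h.2⟩, fun h => h.1⟩

/-- Under the typicality condition `∑_{i∈H} g i = ∑_{i=1}^N g i`, the mean of the
typicality-sampling estimator `ĝ_TS = (1/m)(∑_{i∈h} g i + ∑_{j∈l} g j)` equals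
`(n₁ N)/(N₁ m) · ḡ`, where `ḡ = (1/N) ∑_i g i` is the full gradient. -/
theorem ts_mean_typical {N N₁ N₂ n₁ n₂ m : ℕ} (H L : Finset (Fin N))
    (hdisj : Disjoint H L) (hunion : H ∪ L = Finset.univ)
    (hH : H.card = N₁) (hL : L.card = N₂) (hN : N = N₁ + N₂)
    (hn₁ : 1 ≤ n₁) (hn₁N : n₁ ≤ N₁) (hn₂ : 1 ≤ n₂) (hn₂N : n₂ ≤ N₂)
    (hm : m = n₁ + n₂)
    {E : Type*} [NormedAddCommGroup E] [InnerProductSpace ℝ E] (g : Fin N → E)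
    (htyp : ∑ i ∈ H, g i = ∑ i, g i) :
    u2Exp H L n₁ n₂ (fun h l => (m : ℝ)⁻¹ • (∑ i ∈ h, g i + ∑ j ∈ l, g j))
      = (((n₁ : ℝ) * N) / ((N₁ : ℝ) * m)) • ((N : ℝ)⁻¹ • ∑ i, g i) := by
  have hsumL : ∑ j ∈ L, g j = 0 := by
    have h := Finset.sum_union hdisj (f := g)
    rw [hunion, htyp] at h
    simpa using h
  have hchoose : (N₁ : ℝ) * ((N₁ - 1).choose (n₁ - 1) : ℝ) = (N₁.choose n₁ : ℝ) * n₁ := by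
    obtain ⟨a, rfl⟩ := Nat.exists_eq_add_of_le' hn₁
    obtain ⟨b, rfl⟩ := Nat.exists_eq_add_of_le' (hn₁.trans hn₁N)
    exact_mod_cast Nat.add_one_mul_choose_eq b a
  have hc₁ : (N₁.choose n₁ : ℝ) ≠ 0 := by exact_mod_cast (Nat.choose_pos hn₁N).ne'
  have hc₂ : (N₂.choose n₂ : ℝ) ≠ 0 := by exact_mod_cast (Nat.choose_pos hn₂N).ne'
  have hN₁0 : (N₁ : ℝ) ≠ 0 := by norm_cast; omega
  have hN0 : (N : ℝ) ≠ 0 := by norm_cast; omega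
  have hm0 : (m : ℝ) ≠ 0 := by norm_cast; omega
  simp only [u2Exp, ← Finset.smul_sum, Finset.sum_add_distrib, Finset.sum_const,
    sum_powersetCard_sum L hn₂, sum_powersetCard_sum H hn₁, hsumL, htyp, card_powersetCard,
    hH, hL, smul_zero, add_zero, ← Nat.cast_smul_eq_nsmul ℝ, smul_smul]
  congr 1
  field_simp
  linear_combination hchoose
end

section
/- Let the index set {1,…,N} be partitioned into H of size N₁ ≥ 2 and L of size N₂ ≥ 2 (N = N₁ + N₂), let 1 ≤ n₁ ≤ N₁, 1 ≤ n₂ ≤ N₂, m = n₁ + n₂, and let g₁,…,g_N be vectors in a real inner product space satisfying the typicality condition ∑_{i∈H} g_i = ∑_{i=1}^N g_i (equivalently ∑_{j∈L} g_j = 0). Let ĝ_TS = (1/m)·( ∑_{i∈h} g_i + ∑_{j∈l} g_j ), where h is a uniformly random n₁-subset of H and l is an independent uniformly random n₂-subset of L. Then V[ĝ_TS] = (1/m²)·( n₁/(N₁(N₁−1)) )·(1 − n₁/N₁)·( N₁·∑_{i∈H}‖g_i‖² − ‖∑_{i∈H} g_i‖² ) + (1/m²)·( n₂/(N₂(N₂−1))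 )·(1 − n₂/N₂)·N₂·∑_{j∈L}‖g_j‖². -/
open Finset

/-- Variance `V[f] = E[‖f - E[f]‖²]` under independent uniform sampling of an
`n₁`-subset of `S` and an `n₂`-subset of `T`. -/
noncomputable def u2Var {N : ℕ} {E : Type*} [NormedAddCommGroup E] [InnerProductSpace ℝ E]
    (S T : Finset (Fin N)) (n₁ n₂ : ℕ)
    (f : Finset (Fin N) → Finset (Fin N) → E) : ℝ :=
  u2Exp S T n₁ n₂ (fun h l => ‖f h l - u2Exp S T n₁ n₂ f‖ ^ 2)

section UniformSampling

variable {N : ℕ} {E : Type*} {S T : Finset (Fin N)} {n n₁ n₂ : ℕ}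

section Module

variable [AddCommGroup E] [Module ℝ E]

lemma uExp_congr {f f' : Finset (Fin N) → E} (h : ∀ s ⊆ S, f s = f' s) :
    uExp S n f = uExp S n f' := by
  unfold uExp
  rw [sum_congr rfl fun s hs => h s (mem_powersetCard.1 hs).1]

lemma uExp_add (f f' : Finset (Fin N) → E) :
    uExp S n (fun s => f s + f' s) = uExp S n f + uExp S n f' := by
  simp only [uExp, sum_add_distrib, smul_add]

lemma uExp_sum {ι : Type*} (I : Finset ι) (f : ι → Finset (Fin N) → E) :
    uExp S n (fun s => ∑ i ∈ I, f i s) = ∑ i ∈ I, uExp S n (f i) := by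
  simp only [uExp, ← smul_sum]
  rw [sum_comm]

lemma uExp_const_smul (c : ℝ) (f : Finset (Fin N) → E) :
    uExp S n (fun s => c • f s) = c • uExp S n f := by
  simp only [uExp, ← smul_sum, smul_comm c]

lemma uExp_smul_const (φ : Finset (Fin N) → ℝ) (v : E) :
    uExp S n (fun s => φ s • v) = uExp S n φ • v := by
  simp only [uExp, ← sum_smul, smul_assoc]

lemma uExp_const (hn : n ≤ #S) (v : E) : uExp S n (fun _ => v) = v := by
  have h : ((S.powersetCard n).card : ℝ) ≠ 0 := by
    rw [card_powersetCard]
    exact_mod_cast (Nat.choose_pos hn).ne'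
  rw [uExp, sum_const, ← Nat.cast_smul_eq_nsmul ℝ, inv_smul_smul₀ h]

lemma u2Exp_eq_uExp_uExp (f : Finset (Fin N) → Finset (Fin N) → E) :
    u2Exp S T n₁ n₂ f = uExp S n₁ (fun h => uExp T n₂ (f h)) := by
  simp only [u2Exp, uExp, ← smul_sum, smul_smul, mul_inv]

/-- Probability that a uniformly random `n`-subset of `S` contains a given `A ⊆ S`. -/
lemma uExp_indicator_subset {A : Finset (Fin N)} (hA : A ⊆ S) (hAn : #A ≤ n) :
    uExp S n (fun s => if A ⊆ s then (1 : ℝ) else 0)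
      = ((#S - #A).choose (n - #A) : ℝ) / (#S).choose n := by
  rw [uExp, sum_boole, card_filter_powersetCard_subset _ _ _ hA hAn, card_powersetCard,
    smul_eq_mul, div_eq_inv_mul]

lemma uExp_indicator_mem {i : Fin N} (hi : i ∈ S) (hn : 1 ≤ n) (hnS : n ≤ #S) :
    uExp S n (fun s => if i ∈ s then (1 : ℝ) else 0) = n / #S := by
  have h := uExp_indicator_subset (S := S) (A := {i}) (n := n) (by simpa using hi)
    (by simpa using hn)
  simp only [singleton_subset_iff, card_singleton] at h
  rw [h]
  have hc := Nat.choose_pos hnS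
  obtain ⟨k, rfl⟩ := Nat.exists_eq_add_of_le' hn
  obtain ⟨M, hM⟩ := Nat.exists_eq_add_of_le' (hn.trans hnS)
  rw [hM] at hc ⊢
  have e : ((M : ℝ) + 1) * M.choose k = (M + 1).choose (k + 1) * (k + 1) := by
    exact_mod_cast Nat.add_one_mul_choose_eq M k
  have hc' : ((M + 1).choose (k + 1) : ℝ) ≠ 0 := by exact_mod_cast hc.ne'
  simp only [Nat.add_sub_cancel]
  push_cast
  rw [div_eq_div_iff hc' (by positivity)]
  linarith

lemma uExp_indicator_pair {i j : Fin N} (hi : i ∈ S) (hj : j ∈ S) (hij : i ≠ j)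
    (hn : 1 ≤ n) (hnS : n ≤ #S) :
    uExp S n (fun s => if {i, j} ⊆ s then (1 : ℝ) else 0)
      = (n * (n - 1) : ℝ) / (#S * (#S - 1)) := by
  have hA : ({i, j} : Finset (Fin N)) ⊆ S := by
    simp [insert_subset_iff, hi, hj]
  have hcard : #({i, j} : Finset (Fin N)) = 2 := card_pair hij
  rcases hn.eq_or_lt with rfl | hn2
  · rw [uExp, sum_eq_zero]
    · simp
    · intro s hs
      refine if_neg fun hsub => ?_
      have := card_le_card hsub
      rw [hcard, (mem_powersetCard.1 hs).2] at this
      omega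
  · replace hn2 : 2 ≤ n := hn2
    rw [uExp_indicator_subset hA (hcard.le.trans hn2), hcard]
    have hc := Nat.choose_pos hnS
    obtain ⟨k, rfl⟩ := Nat.exists_eq_add_of_le' hn2
    obtain ⟨M, hM⟩ := Nat.exists_eq_add_of_le' (hn2.trans hnS)
    rw [hM] at hc ⊢
    have e₁ : ((M : ℝ) + 1) * M.choose k = (M + 1).choose (k + 1) * (k + 1) := by
      exact_mod_cast Nat.add_one_mul_choose_eq M k
    have e₂ : ((M : ℝ) + 1 + 1) * (M + 1).choose (k + 1)
        = (M + 2).choose (k + 2) * (k + 1 + 1) := by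
      exact_mod_cast Nat.add_one_mul_choose_eq (M + 1) (k + 1)
    have hc' : ((M + 2).choose (k + 2) : ℝ) ≠ 0 := by exact_mod_cast hc.ne'
    have hM1 : ((M : ℝ) + 1) ≠ 0 := by positivity
    have hM2 : ((M : ℝ) + 2) ≠ 0 := by positivity
    simp only [Nat.add_sub_cancel]
    push_cast
    rw [show (M : ℝ) + 2 - 1 = M + 1 by ring, div_eq_div_iff hc' (mul_ne_zero hM2 hM1)]
    linear_combination (M + 2 : ℝ) * e₁ + (k + 1 : ℝ) * e₂

lemma uExp_sum_mem (hn : 1 ≤ n) (hnS : n ≤ #S) (g : Fin N → E) :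
    uExp S n (fun s => ∑ i ∈ s, g i) = ((n : ℝ) / #S) • ∑ i ∈ S, g i := by
  have h : ∀ s ⊆ S, ∑ i ∈ s, g i = ∑ i ∈ S, (if i ∈ s then (1 : ℝ) else 0) • g i := by
    intro s hs
    simp only [ite_smul, one_smul, zero_smul]
    rw [sum_ite_mem, inter_eq_right.2 hs]
  rw [uExp_congr h, uExp_sum, smul_sum]
  refine sum_congr rfl fun i hi => ?_
  rw [uExp_smul_const, uExp_indicator_mem hi hn hnS]

end Module

variable [NormedAddCommGroup E] [InnerProductSpace ℝ E]

lemma norm_sum_sq_eq_sum_inner {ι : Type*} (I : Finset ι) (g : ι → E) :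
    ‖∑ i ∈ I, g i‖ ^ 2 = ∑ i ∈ I, ∑ j ∈ I, inner ℝ (g i) (g j) := by
  rw [← real_inner_self_eq_norm_sq, sum_inner]
  simp only [inner_sum]

lemma uExp_inner_right (v : E) (f : Finset (Fin N) → E) :
    uExp S n (fun s => inner ℝ v (f s)) = inner ℝ v (uExp S n f) := by
  simp only [uExp, inner_smul_right, inner_sum, smul_eq_mul]

lemma uExp_norm_sum_mem_sq (hn : 1 ≤ n) (hnS : n ≤ #S) (g : Fin N → E) :
    uExp S n (fun s => ‖∑ i ∈ s, g i‖ ^ 2)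
      = (n * (n - 1) : ℝ) / (#S * (#S - 1)) * ‖∑ i ∈ S, g i‖ ^ 2
        + ((n : ℝ) / #S - (n * (n - 1) : ℝ) / (#S * (#S - 1))) * ∑ i ∈ S, ‖g i‖ ^ 2 := by
  have h : ∀ s ⊆ S, ‖∑ i ∈ s, g i‖ ^ 2
      = ∑ i ∈ S, ∑ j ∈ S, (if {i, j} ⊆ s then (1 : ℝ) else 0) • (inner ℝ (g i) (g j) : ℝ) := by
    intro s hs
    rw [norm_sum_sq_eq_sum_inner]
    simp only [insert_subset_iff, singleton_subset_iff, ite_and, ite_smul, one_smul, zero_smul]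
    rw [← inter_eq_right.2 hs, ← sum_ite_mem]
    refine sum_congr rfl fun i _ => ?_
    rw [inter_eq_right.2 hs]
    split_ifs
    · rw [sum_ite_mem, inter_eq_right.2 hs]
    · simp
  rw [uExp_congr h, uExp_sum, norm_sum_sq_eq_sum_inner, mul_sum, mul_sum, ← sum_add_distrib]
  refine sum_congr rfl fun i hi => ?_
  rw [uExp_sum, ← add_sum_erase _ _ hi, ← add_sum_erase _ (fun j => inner ℝ (g i) (g j)) hi,
    mul_add, mul_sum]
  have hoff : ∀ j ∈ S.erase i,
      uExp S n (fun s => (if {i, j} ⊆ s then (1 : ℝ) else 0) • (inner ℝ (g i) (g j) : ℝ))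
        = (n * (n - 1) : ℝ) / (#S * (#S - 1)) * inner ℝ (g i) (g j) := by
    intro j hj
    rw [uExp_smul_const, uExp_indicator_pair hi (mem_of_mem_erase hj) (ne_of_mem_erase hj).symm
      hn hnS, smul_eq_mul]
  rw [sum_congr rfl hoff, uExp_smul_const]
  simp only [pair_eq_singleton, singleton_subset_iff]
  rw [uExp_indicator_mem hi hn hnS, smul_eq_mul, real_inner_self_eq_norm_sq]
  ring

lemma uExp_norm_sub_uExp_sq (hnS : n ≤ #S) (f : Finset (Fin N) → E) :
    uExp S n (fun s => ‖f s - uExp S n f‖ ^ 2)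
      = uExp S n (fun s => ‖f s‖ ^ 2) - ‖uExp S n f‖ ^ 2 := by
  have h : ∀ s, ‖f s - uExp S n f‖ ^ 2
      = ‖f s‖ ^ 2 + ((-2 : ℝ) • inner ℝ (uExp S n f) (f s) + ‖uExp S n f‖ ^ 2) := by
    intro s
    rw [norm_sub_sq_real, real_inner_comm, smul_eq_mul]
    ring
  simp only [h]
  rw [uExp_add, uExp_add, uExp_const hnS, uExp_const_smul, uExp_inner_right,
    real_inner_self_eq_norm_sq, smul_eq_mul]
  ring

/-- Variance of the sum over a simple random sample drawn without replacement. -/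
lemma uExp_norm_sum_mem_sub_sq (hn : 1 ≤ n) (hnS : n ≤ #S) (hS : 2 ≤ #S) (g : Fin N → E) :
    uExp S n (fun s => ‖∑ i ∈ s, g i - uExp S n (fun s => ∑ i ∈ s, g i)‖ ^ 2)
      = (n : ℝ) / (#S * (#S - 1)) * (1 - n / #S)
        * (#S * ∑ i ∈ S, ‖g i‖ ^ 2 - ‖∑ i ∈ S, g i‖ ^ 2) := by
  rw [uExp_norm_sub_uExp_sq hnS, uExp_norm_sum_mem_sq hn hnS, uExp_sum_mem hn hnS, norm_smul,
    mul_pow, Real.norm_eq_abs, sq_abs]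
  have hS' : (2 : ℝ) ≤ #S := by exact_mod_cast hS
  have h₀ : (#S : ℝ) ≠ 0 := by linarith
  have h₁ : (#S : ℝ) - 1 ≠ 0 := by linarith
  field_simp
  ring

/-- Under independent sampling, the variance of a sum splits. -/
lemma u2Var_smul_add (hS : n₁ ≤ #S) (hT : n₂ ≤ #T) (c : ℝ) (X Y : Finset (Fin N) → E) :
    u2Var S T n₁ n₂ (fun h l => c • (X h + Y l))
      = c ^ 2 * (uExp S n₁ (fun h => ‖X h - uExp S n₁ X‖ ^ 2)
        + uExp T n₂ (fun l => ‖Y l - uExp T n₂ Y‖ ^ 2)) := by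
  have hmean : u2Exp S T n₁ n₂ (fun h l => c • (X h + Y l))
      = c • (uExp S n₁ X + uExp T n₂ Y) := by
    simp only [u2Exp_eq_uExp_uExp, uExp_const_smul, uExp_add, uExp_const hT, uExp_const hS]
  have hzero : uExp T n₂ (fun l => Y l - uExp T n₂ Y) = 0 := by
    simp only [sub_eq_add_neg, uExp_add, uExp_const hT, add_neg_cancel]
  have hsq : ∀ h l, ‖c • (X h + Y l) - c • (uExp S n₁ X + uExp T n₂ Y)‖ ^ 2
      = c ^ 2 • (‖X h - uExp S n₁ X‖ ^ 2
        + ((2 : ℝ) • inner ℝ (X h - uExp S n₁ X) (Y l - uExp T n₂ Y)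
          + ‖Y l - uExp T n₂ Y‖ ^ 2)) := by
    intro h l
    rw [← smul_sub, add_sub_add_comm, norm_smul, mul_pow, Real.norm_eq_abs, sq_abs,
      norm_add_sq_real, smul_eq_mul, smul_eq_mul, add_assoc]
  rw [u2Var, hmean]
  simp only [hsq, u2Exp_eq_uExp_uExp, uExp_const_smul, uExp_add, uExp_const hT, uExp_const hS,
    uExp_inner_right, hzero, inner_zero_right, smul_zero, zero_add]
  rw [smul_eq_mul]

end UniformSampling

/-- Variance of the typicality-sampling estimator
`ĝ_TS = (1/m)(∑_{i∈h} g i + ∑_{j∈l} g j)` under the typicality condition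
`∑_{i∈H} g i = ∑_i g i` (equivalently `∑_{j∈L} g j = 0`):
`V[ĝ_TS] = (1/m²)(n₁/(N₁(N₁−1)))(1 − n₁/N₁)(N₁ ∑_{i∈H}‖g i‖² − ‖∑_{i∈H} g i‖²)
         + (1/m²)(n₂/(N₂(N₂−1)))(1 − n₂/N₂) N₂ ∑_{j∈L}‖g j‖²`. -/
theorem ts_variance {N N₁ N₂ n₁ n₂ m : ℕ} (H L : Finset (Fin N))
    (hdisj : Disjoint H L) (hunion : H ∪ L = Finset.univ)
    (hH : H.card = N₁) (hL : L.card = N₂) (hN : N = N₁ + N₂)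
    (hN₁ : 2 ≤ N₁) (hN₂ : 2 ≤ N₂)
    (hn₁ : 1 ≤ n₁) (hn₁N : n₁ ≤ N₁) (hn₂ : 1 ≤ n₂) (hn₂N : n₂ ≤ N₂)
    (hm : m = n₁ + n₂)
    {E : Type*} [NormedAddCommGroup E] [InnerProductSpace ℝ E] (g : Fin N → E)
    (htyp : ∑ i ∈ H, g i = ∑ i, g i) :
    u2Var H L n₁ n₂ (fun h l => (m : ℝ)⁻¹ • (∑ i ∈ h, g i + ∑ j ∈ l, g j))
      = (1 / (m : ℝ) ^ 2) * ((n₁ : ℝ) / ((N₁ : ℝ) * ((N₁ : ℝ) - 1)))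
          * (1 - (n₁ : ℝ) / N₁)
          * ((N₁ : ℝ) * ∑ i ∈ H, ‖g i‖ ^ 2 - ‖∑ i ∈ H, g i‖ ^ 2)
        + (1 / (m : ℝ) ^ 2) * ((n₂ : ℝ) / ((N₂ : ℝ) * ((N₂ : ℝ) - 1)))
          * (1 - (n₂ : ℝ) / N₂)
          * ((N₂ : ℝ) * ∑ j ∈ L, ‖g j‖ ^ 2) := by
  have hL0 : ∑ j ∈ L, g j = 0 := by
    rw [← hunion, sum_union hdisj] at htyp
    exact left_eq_add.1 htyp
  subst hH hL
  rw [u2Var_smul_add hn₁N hn₂N, uExp_norm_sum_mem_sub_sq hn₁ hn₁N hN₁,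
    uExp_norm_sum_mem_sub_sq hn₂ hn₂N hN₂, hL0, norm_zero, inv_pow]
  ring
end
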